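/- Suppose every state of the ε-Markov chain has a path to the absorbing set A using only regular edges. For each state i, define V_i(ε) as the sum, over all finite paths from i ending in A whose every step is a regular edge and whose states before the last lie outside A, of the product of the P(ε)-weights of the steps (i.e., the probability of being absorbed before ever taking an ε-edge). Then lim_{ε→0⁺} V_i(ε) = 1 for every state i. -/

import Mathlib

/-!
For small `ε ≥ 0` the matrix `P(ε)` is stochastic. Grouping the regular hitting paths by
length, the partial sum `h_n(ε, i)` over paths with at most `n` steps obeys a first-step
recursion (`sum_truncPaths`), so `h_n(ε, i) ≤ V_i(ε) ≤ 1` (`truncProb_le_tsum_le_one`), and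
for fixed `n` it is a polynomial in `ε`. It therefore suffices that `h_n(0, i) → 1` as
`n → ∞`. The increasing limit `u` of `h_n(0, ·)` equals `1` on `A` and is `r`-harmonic off
`A`; its minimum propagates along regular edges, which lead to `A`, so `u = 1` everywhere
(`eq_one_of_harmonic`).
-/

open Filter Topology
open scoped Classical

noncomputable section

/-- Product of transition weights along a path (given as the list of visited states). -/
def pathWeight {W : Type*} (M : W → W → ℝ) (l : List W) : ℝ :=
  ((l.zip l.tail).map fun p => M p.1 p.2).prod

/-- Row sums `t i = Σ_j c i j` of the ε-coefficients. -/
def rowT {V : Type*} [Fintype V] (c : V → V → ℝ) (i : V) : ℝ := ∑ j, c i j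

/-- The transition matrix `P(ε) i j = (1 − ε·t i)·r i j + ε·c i j` of the ε-Markov chain. -/
def Pmat {V : Type*} [Fintype V] (r c : V → V → ℝ) (ε : ℝ) (i j : V) : ℝ :=
  (1 - ε * rowT c i) * r i j + ε * c i j

/-- A path from `i` hitting `S`: `i = v₀, …, v_k` with `v_k ∈ S` and `v₀, …, v_{k−1} ∉ A`. -/
def IsHitPath {W : Type*} (A S : Set W) (i : W) (l : List W) : Prop :=
  l.head? = some i ∧ (∃ x ∈ S, l.getLast? = some x) ∧ ∀ p ∈ l.dropLast, p ∉ A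

/-- The hitting probability of `S` from `i`: the sum over all finite paths
`i = v₀, …, v_k` with `v_k ∈ S` and `v₀, …, v_{k−1} ∉ A` of `Π_{m<k} M v_m v_{m+1}`. -/
def hitProb {W : Type*} (M : W → W → ℝ) (A S : Set W) (i : W) : ℝ :=
  ∑' l : {l : List W // IsHitPath A S i l}, pathWeight M l.1

/-- A path from `i` to `A` using only regular edges, with all states before the last
outside `A`. -/
def IsRegHitPath {V : Type*} (r : V → V → ℝ) (A : Set V) (i : V) (l : List V) : Prop :=
  l.head? = some i ∧ (∃ x ∈ A, l.getLast? = some x) ∧ (∀ p ∈ l.dropLast, p ∉ A) ∧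
  l.Chain' fun a b => 0 < r a b

/-- `V_i(ε)`: the probability of being absorbed before ever taking an ε-edge — the sum,
over all finite paths from `i` ending in `A` whose every step is a regular edge and whose
states before the last lie outside `A`, of the product of the `P(ε)`-weights. -/
def regAbsorbProb {V : Type*} [Fintype V] (r c : V → V → ℝ) (A : Set V) (i : V) (ε : ℝ) : ℝ :=
  ∑' l : {l : List V // IsRegHitPath r A i l}, pathWeight (Pmat r c ε) l.1

/-! ### Paths with boundedly many steps -/

/-- The length-truncated set of regular hitting paths: those from `i` to `A` with at most
`n` steps, built by first-step recursion. -/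
def truncPaths {V : Type*} [Fintype V] (r : V → V → ℝ) (A : Set V) : ℕ → V → Finset (List V)
  | 0, i => if i ∈ A then {[i]} else ∅
  | n + 1, i => if i ∈ A then {[i]} else
      (Finset.univ.filter fun j => 0 < r i j).biUnion fun j =>
        (truncPaths r A n j).image (List.cons i)

/-- The probability, under weights `M`, of reaching `A` from `i` along regular edges within
`n` steps, given by its first-step recursion. -/
def truncProb {V : Type*} [Fintype V] (r M : V → V → ℝ) (A : Set V) : ℕ → V → ℝ
  | 0, i => if i ∈ A then 1 else 0
  | n + 1, i => if i ∈ A then 1 else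
      ∑ j ∈ Finset.univ.filter (fun j => 0 < r i j), M i j * truncProb r M A n j

section Paths

variable {V : Type*} {r : V → V → ℝ} {A : Set V}

lemma isRegHitPath_of_mem {i : V} (hi : i ∈ A) (l : List V) :
    IsRegHitPath r A i l ↔ l = [i] := by
  constructor
  · rintro ⟨h1, -, h3, -⟩
    match l, h1, h3 with
    | [a], h1, _ => simpa using h1
    | a :: b :: l, h1, h3 =>
      simp only [List.head?_cons, Option.some.injEq] at h1
      subst h1
      exact absurd hi (h3 _ (by simp))
  · rintro rfl
    exact ⟨rfl, ⟨i, hi, rfl⟩, by simp, List.isChain_singleton _⟩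

lemma isRegHitPath_of_notMem {i : V} (hi : i ∉ A) (l : List V) :
    IsRegHitPath r A i l ↔ ∃ j, 0 < r i j ∧ ∃ l', IsRegHitPath r A j l' ∧ i :: l' = l := by
  constructor
  · rintro ⟨h1, ⟨x, hx, h2⟩, h3, h4⟩
    match l, h1, h2, h3, h4 with
    | [a], h1, h2, _, _ =>
      simp only [List.head?_cons, Option.some.injEq, List.getLast?_singleton] at h1 h2
      exact absurd (h1 ▸ h2 ▸ hx) hi
    | a :: b :: l, h1, h2, h3, h4 =>
      simp only [List.head?_cons, Option.some.injEq] at h1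
      subst h1
      obtain ⟨h5, h6⟩ := List.isChain_cons_cons.1 h4
      refine ⟨b, h5, b :: l, ⟨rfl, ⟨x, hx, by simpa using h2⟩, fun p hp => h3 p ?_, h6⟩, rfl⟩
      rw [List.dropLast_cons_of_ne_nil (by simp)]
      exact List.mem_cons_of_mem _ hp
  · rintro ⟨j, hj, l', ⟨h1, ⟨x, hx, h2⟩, h3, h4⟩, rfl⟩
    match l', h1, h2, h3, h4 with
    | b :: l, h1, h2, h3, h4 =>
      simp only [List.head?_cons, Option.some.injEq] at h1
      subst h1
      refine ⟨rfl, ⟨x, hx, by simpa using h2⟩, ?_, List.isChain_cons_cons.2 ⟨hj, h4⟩⟩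
      intro p hp
      rw [List.dropLast_cons_of_ne_nil (by simp)] at hp
      rcases List.mem_cons.1 hp with rfl | hp
      · exact hi
      · exact h3 p hp

lemma pathWeight_cons (M : V → V → ℝ) (i : V) {j : V} {l : List V} (h : l.head? = some j) :
    pathWeight M (i :: l) = M i j * pathWeight M l := by
  match l, h with
  | b :: l, h =>
    simp only [List.head?_cons, Option.some.injEq] at h
    subst h
    simp [pathWeight]

lemma pathWeight_nonneg {M : V → V → ℝ} (hM : ∀ i j, 0 ≤ M i j) (l : List V) :
    0 ≤ pathWeight M l := by
  apply List.prod_nonneg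
  intro a ha
  obtain ⟨p, -, rfl⟩ := List.mem_map.1 ha
  exact hM _ _

variable [Fintype V]

lemma mem_truncPaths (n : ℕ) (i : V) (l : List V) :
    l ∈ truncPaths r A n i ↔ IsRegHitPath r A i l ∧ l.length ≤ n + 1 := by
  induction n generalizing i l with
  | zero =>
    by_cases hi : i ∈ A
    · simp only [truncPaths, hi, if_true, Finset.mem_singleton, isRegHitPath_of_mem hi]
      constructor
      · rintro rfl; simp
      · exact fun h => h.1
    · simp only [truncPaths, hi, if_false, Finset.notMem_empty, isRegHitPath_of_notMem hi,
        false_iff, not_and]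
      rintro ⟨j, -, l', ⟨h1, -⟩, rfl⟩
      match l', h1 with
      | b :: l, _ => simp
  | succ n ih =>
    by_cases hi : i ∈ A
    · simp only [truncPaths, hi, if_true, Finset.mem_singleton, isRegHitPath_of_mem hi]
      constructor
      · rintro rfl; simp
      · exact fun h => h.1
    · simp only [truncPaths, hi, if_false, isRegHitPath_of_notMem hi, Finset.mem_biUnion,
        Finset.mem_filter, Finset.mem_univ, true_and, Finset.mem_image, ih]
      constructor
      · rintro ⟨j, hj, l', ⟨h, hl⟩, rfl⟩
        exact ⟨⟨j, hj, l', h, rfl⟩, by simpa using hl⟩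
      · rintro ⟨⟨j, hj, l', h, rfl⟩, hl⟩
        exact ⟨j, hj, l', ⟨h, by simpa using hl⟩, rfl⟩

lemma sum_truncPaths (M : V → V → ℝ) (n : ℕ) (i : V) :
    ∑ l ∈ truncPaths r A n i, pathWeight M l = truncProb r M A n i := by
  induction n generalizing i with
  | zero =>
    by_cases hi : i ∈ A <;> simp [truncPaths, truncProb, hi, pathWeight]
  | succ n ih =>
    by_cases hi : i ∈ A
    · simp [truncPaths, truncProb, hi, pathWeight]
    · simp only [truncPaths, truncProb, hi, if_false]
      rw [Finset.sum_biUnion]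
      · refine Finset.sum_congr rfl fun j _ => ?_
        rw [Finset.sum_image (by simp), ← ih, Finset.mul_sum]
        exact Finset.sum_congr rfl fun l hl =>
          pathWeight_cons M i ((mem_truncPaths n j l).1 hl).1.1
      · intro j _ k _ hjk
        -- the second state of the path determines the block it lies in
        refine Finset.disjoint_left.2 fun l hl hl' => hjk ?_
        obtain ⟨l₁, h1, rfl⟩ := Finset.mem_image.1 hl
        obtain ⟨l₂, h2, h3⟩ := Finset.mem_image.1 hl'
        obtain rfl : l₂ = l₁ := (List.cons.inj h3).2
        have e1 := ((mem_truncPaths n j l₂).1 h1).1.1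
        have e2 := ((mem_truncPaths n k l₂).1 h2).1.1
        exact Option.some.inj (e1.symm.trans e2)

/-! ### Truncated absorption probabilities -/

lemma truncProb_le_one {M : V → V → ℝ} (hM : ∀ i j, 0 ≤ M i j)
    (hM1 : ∀ i, ∑ j, M i j ≤ 1) (n : ℕ) (i : V) : truncProb r M A n i ≤ 1 := by
  induction n generalizing i with
  | zero => rw [truncProb]; split_ifs <;> norm_num
  | succ n ih =>
    rw [truncProb]
    split_ifs
    · exact le_rfl
    · calc ∑ j ∈ Finset.univ.filter (fun j => 0 < r i j), M i j * truncProb r M A n j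
          ≤ ∑ j ∈ Finset.univ.filter (fun j => 0 < r i j), M i j :=
            Finset.sum_le_sum fun j _ => mul_le_of_le_one_right (hM i j) (ih j)
        _ ≤ ∑ j, M i j :=
            Finset.sum_le_sum_of_subset_of_nonneg (Finset.filter_subset _ _)
              fun j _ _ => hM i j
        _ ≤ 1 := hM1 i

lemma truncProb_mono {M : V → V → ℝ} (hM : ∀ i j, 0 ≤ M i j) (i : V) :
    Monotone fun n => truncProb r M A n i := by
  refine monotone_nat_of_le_succ fun n => ?_
  induction n generalizing i with
  | zero =>
    simp only [truncProb]
    split_ifs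
    · exact le_rfl
    · refine Finset.sum_nonneg fun j _ => mul_nonneg (hM i j) ?_
      split_ifs <;> norm_num
  | succ n ih =>
    rw [truncProb, truncProb]
    split_ifs
    · exact le_rfl
    · exact Finset.sum_le_sum fun j _ => mul_le_mul_of_nonneg_left (ih j) (hM i j)

lemma continuous_truncProb (c : V → V → ℝ) (n : ℕ) (i : V) :
    Continuous fun ε => truncProb r (Pmat r c ε) A n i := by
  induction n generalizing i with
  | zero => simp only [truncProb]; exact continuous_const
  | succ n ih =>
    simp only [truncProb]
    split_ifs
    · exact continuous_const
    · refine continuous_finsetSum _ fun j _ => Continuous.mul ?_ (ih j)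
      unfold Pmat
      fun_prop

/-- The truncated probabilities sandwich the full path sum. Summability is obtained on the
way, so that the `tsum` is not a junk value. -/
lemma truncProb_le_tsum_le_one {M : V → V → ℝ} (hM : ∀ i j, 0 ≤ M i j)
    (hM1 : ∀ i, ∑ j, M i j ≤ 1) (n : ℕ) (i : V) :
    truncProb r M A n i ≤ ∑' l : {l : List V // IsRegHitPath r A i l}, pathWeight M l.1 ∧
      ∑' l : {l : List V // IsRegHitPath r A i l}, pathWeight M l.1 ≤ 1 := by
  have h0 : ∀ l : {l : List V // IsRegHitPath r A i l}, 0 ≤ pathWeight M l.1 :=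
    fun l => pathWeight_nonneg hM _
  have hle : ∀ u : Finset {l : List V // IsRegHitPath r A i l},
      ∑ l ∈ u, pathWeight M l.1 ≤ 1 := by
    intro u
    calc ∑ l ∈ u, pathWeight M l.1
        = ∑ l ∈ u.map (Function.Embedding.subtype _), pathWeight M l := by
          rw [Finset.sum_map]; rfl
      _ ≤ ∑ l ∈ truncPaths r A (u.sup fun l => l.1.length) i, pathWeight M l := by
          refine Finset.sum_le_sum_of_subset_of_nonneg ?_ fun l _ _ => pathWeight_nonneg hM l
          intro l hl
          obtain ⟨l', hl', rfl⟩ := Finset.mem_map.1 hl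
          have := Finset.le_sup (f := fun l : {l : List V // IsRegHitPath r A i l} =>
            l.1.length) hl'
          exact (mem_truncPaths _ _ _).2 ⟨l'.2, this.trans (Nat.le_succ _)⟩
      _ ≤ 1 := by rw [sum_truncPaths]; exact truncProb_le_one hM hM1 _ i
  have hs := summable_of_sum_le h0 hle
  refine ⟨?_, hs.tsum_le_of_sum_le hle⟩
  rw [← sum_truncPaths,
    ← Finset.sum_subtype_of_mem (p := IsRegHitPath r A i) (fun l => pathWeight M l)
      fun l hl => ((mem_truncPaths n i l).1 hl).1]
  exact hs.sum_le_tsum _ fun l _ => h0 l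

/-! ### Absorption of the regular chain -/

/-- Minimum principle: a minimal value of a function harmonic off `A` propagates along
regular edges, hence reaches `A`, where the function is `1`. -/
lemma eq_one_of_harmonic {u : V → ℝ} {m : ℝ}
    (hr0 : ∀ i j, 0 ≤ r i j) (hr1 : ∀ i, ∑ j, r i j = 1)
    (hA : ∀ i ∈ A, u i = 1) (hh : ∀ i ∉ A, u i = ∑ j, r i j * u j) (hm : ∀ i, m ≤ u i)
    (l : List V) (i : V) (h1 : l.head? = some i) (h2 : l.IsChain (fun a b => 0 < r a b))
    (h3 : ∃ x ∈ A, l.getLast? = some x) (hi : u i = m) : m = 1 := by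
  induction l generalizing i with
  | nil => simp at h1
  | cons a l ih =>
    simp only [List.head?_cons, Option.some.injEq] at h1
    subst h1
    by_cases ha : a ∈ A
    · rw [← hi, hA a ha]
    match l, h2, h3, ih with
    | [], _, h3, _ =>
      obtain ⟨x, hx, h⟩ := h3
      simp only [List.getLast?_singleton, Option.some.injEq] at h
      exact absurd (h ▸ hx) ha
    | b :: l, h2, h3, ih =>
      obtain ⟨hab, h2⟩ := List.isChain_cons_cons.1 h2
      refine ih b rfl h2 (by simpa using h3) ?_
      -- the mean of `u - m ≥ 0` over the `r`-successors of `a` vanishes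
      have hz : ∑ j, r a j * (u j - m) = 0 := by
        simp only [mul_sub, Finset.sum_sub_distrib, ← Finset.sum_mul]
        rw [← hh a ha, hr1, hi]; ring
      have := (Finset.sum_eq_zero_iff_of_nonneg fun j _ =>
        mul_nonneg (hr0 a j) (sub_nonneg.2 (hm j))).1 hz b (Finset.mem_univ _)
      rcases mul_eq_zero.1 this with h | h
      · exact absurd h hab.ne'
      · linarith

lemma tendsto_truncProb_regular (hr0 : ∀ i j, 0 ≤ r i j) (hr1 : ∀ i, ∑ j, r i j = 1)
    (hpath : ∀ i, ∃ l : List V, l.head? = some i ∧ l.IsChain (fun a b => 0 < r a b) ∧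
      ∃ x ∈ A, l.getLast? = some x) (i : V) :
    Tendsto (fun n => truncProb r r A n i) atTop (𝓝 1) := by
  have hb : ∀ n i, truncProb r r A n i ≤ 1 :=
    truncProb_le_one hr0 fun i => (hr1 i).le
  have hlim : ∀ i, ∃ x, Tendsto (fun n => truncProb r r A n i) atTop (𝓝 x) := fun i =>
    ⟨_, tendsto_atTop_ciSup (truncProb_mono hr0 i) ⟨1, by rintro _ ⟨n, rfl⟩; exact hb n i⟩⟩
  choose u hu using hlim
  have hA : ∀ i ∈ A, u i = 1 := fun i hi =>
    tendsto_nhds_unique ((tendsto_add_atTop_iff_nat 1).2 (hu i)) (by simp [truncProb, hi])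
  have hh : ∀ i ∉ A, u i = ∑ j, r i j * u j := by
    intro i hi
    refine tendsto_nhds_unique ((tendsto_add_atTop_iff_nat 1).2 (hu i)) ?_
    have : ∀ n, truncProb r r A (n + 1) i = ∑ j, r i j * truncProb r r A n j := by
      intro n
      simp only [truncProb, hi, if_false]
      refine Finset.sum_subset (Finset.filter_subset _ _) fun j _ hj => ?_
      have : r i j = 0 := le_antisymm (by simpa using hj) (hr0 i j)
      simp [this]
    simp only [this]
    exact tendsto_finsetSum _ fun j _ => (hu j).const_mul _
  have : Nonempty V := ⟨i⟩
  obtain ⟨k, hk⟩ := Finite.exists_min u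
  obtain ⟨l, h1, h2, h3⟩ := hpath k
  have hk1 := eq_one_of_harmonic hr0 hr1 hA hh hk l k h1 h2 h3 rfl
  have : u i = 1 := le_antisymm (le_of_tendsto' (hu i) fun n => hb n i) (hk1 ▸ hk i)
  exact this ▸ hu i

/-! ### The perturbed transition matrix -/

lemma Pmat_zero (c : V → V → ℝ) : Pmat r c 0 = r := by
  ext i j; simp [Pmat]

lemma sum_Pmat (c : V → V → ℝ) (hr1 : ∀ i, ∑ j, r i j = 1) (ε : ℝ) (i : V) :
    ∑ j, Pmat r c ε i j = 1 := by
  simp only [Pmat, Finset.sum_add_distrib, ← Finset.mul_sum, hr1, rowT]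
  ring

lemma eventually_Pmat_nonneg {c : V → V → ℝ} (hr0 : ∀ i j, 0 ≤ r i j)
    (hc0 : ∀ i j, 0 ≤ c i j) : ∀ᶠ ε in 𝓝[>] (0 : ℝ), ∀ i j, 0 ≤ Pmat r c ε i j := by
  have h : ∀ᶠ ε in 𝓝[>] (0 : ℝ), ∀ i, 0 < 1 - ε * rowT c i := by
    refine eventually_all.2 fun i => Filter.Eventually.filter_mono nhdsWithin_le_nhds ?_
    have : Continuous fun ε : ℝ => 1 - ε * rowT c i := by fun_prop
    exact this.continuousAt.eventually (lt_mem_nhds (by simp))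
  filter_upwards [h, self_mem_nhdsWithin] with ε h1 h2 i j
  exact add_nonneg (mul_nonneg (h1 i).le (hr0 i j)) (mul_nonneg (le_of_lt h2) (hc0 i j))

end Paths

/-! ### The limit -/

/-- if every state has a path to `A` using only regular edges, then
`lim_{ε→0⁺} V_i(ε) = 1` for every state `i`. -/
theorem regAbsorbProb_tendsto_one
    {V : Type*} [Fintype V] (r c : V → V → ℝ) (A : Set V)
    (hr0 : ∀ i j, 0 ≤ r i j) (hr1 : ∀ i, ∑ j, r i j = 1)
    (hc0 : ∀ i j, 0 ≤ c i j)
    (hAr : ∀ i ∈ A, r i i = 1) (hAc : ∀ i ∈ A, ∀ j, c i j = 0)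
    (hpath : ∀ i, ∃ l : List V, l.head? = some i ∧ l.Chain' (fun a b => 0 < r a b) ∧
      ∃ x ∈ A, l.getLast? = some x) :
    ∀ i, Filter.Tendsto (fun ε => regAbsorbProb r c A i ε) (𝓝[>] (0:ℝ)) (𝓝 1) := by
  intro i
  rw [tendsto_order]
  have hnn := eventually_Pmat_nonneg hr0 hc0
  constructor
  · intro a ha
    obtain ⟨n, hn⟩ :=
      ((tendsto_truncProb_regular hr0 hr1 hpath i).eventually (lt_mem_nhds ha)).exists
    have hcont : ∀ᶠ ε in 𝓝[>] (0 : ℝ), a < truncProb r (Pmat r c ε) A n i :=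
      Filter.Eventually.filter_mono nhdsWithin_le_nhds
        ((continuous_truncProb c n i).continuousAt.eventually
          (lt_mem_nhds (by simpa only [Pmat_zero] using hn)))
    filter_upwards [hnn, hcont] with ε h1 h2
    exact h2.trans_le
      (truncProb_le_tsum_le_one h1 (fun i => (sum_Pmat c hr1 ε i).le) n i).1
  · intro a ha
    filter_upwards [hnn] with ε h1
    exact (truncProb_le_tsum_le_one h1 (fun i => (sum_Pmat c hr1 ε i).le) 0 i).2.trans_lt ha

end
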